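/- Let X = {x_0,...,x_m} and X' = {x'_0,...,x'_q}, let c ∈ ℝ^q⟨⟨X⟩⟩ and let d ∈ ℝ^m⟨⟨X'⟩⟩ be purely improper. Then the series e₀ := c ⟲ (d^{⧢-1} ∘ c)^{⋆-1} ∈ ℝ^q⟨⟨X⟩⟩ is the unique solution of the fixed point equation e = c ⟲ (d ∘ e) in ℝ^q⟨⟨X⟩⟩. -/

import Mathlib

open scoped BigOperators

namespace CFS

noncomputable section

/-- The alphabet `X = {x_0, x_1, ..., x_m}`: `none` encodes `x_0`, `some i` encodes `x_{i+1}`. -/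
abbrev Letter (m : ℕ) := Option (Fin m)

/-- Words over the alphabet `X`. -/
abbrev Word (m : ℕ) := List (Letter m)

/-- Formal power series `ℝ⟨⟨X⟩⟩`: coefficient functions on words. -/
abbrev FPS (m : ℕ) := Word m → ℝ

/-- Tuples of series `ℝ^ℓ⟨⟨X⟩⟩`. -/
abbrev FPST (m ℓ : ℕ) := Fin ℓ → FPS m

/-- The series `𝟙` (coefficient 1 at the empty word). -/
def unit (m : ℕ) : FPS m := fun w => if w = [] then 1 else 0

/-- The tuple `1l = (𝟙,...,𝟙)`. -/
def unitT (m ℓ : ℕ) : FPST m ℓ := fun _ => unit m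

/-- Left concatenation of a series by the letter `x`. -/
def lc {m : ℕ} (x : Letter m) (c : FPS m) : FPS m :=
  fun w => match w with
  | [] => 0
  | y :: u => if y = x then c u else 0

/-- The shuffle product `c ⧢ d`, given by the coefficientwise recursion dual to the
word recursion `(x u) ⧢ (y v) = x(u ⧢ (y v)) + y((x u) ⧢ v)`, `𝟙 ⧢ η = η ⧢ 𝟙 = η`:
left shifts act as derivations. -/
def sh {m : ℕ} : FPS m → FPS m → FPS m
  | c, d, [] => c [] * d []
  | c, d, x :: w => sh (fun u => c (x :: u)) d w + sh c (fun u => d (x :: u)) w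

/-- Componentwise shuffle on tuples. -/
def shT {m ℓ : ℕ} (c d : FPST m ℓ) : FPST m ℓ := fun i => sh (c i) (d i)

/-- A tuple is purely improper when each component has a nonzero constant coefficient. -/
def PurelyImproper {m ℓ : ℕ} (c : FPST m ℓ) : Prop := ∀ i, c i [] ≠ 0

/-- `η ⟲ d` on a word `η`. -/
def wmc {m : ℕ} (d : FPST m m) : Word m → FPS m
  | [] => unit m
  | none :: η => lc none (wmc d η)
  | some i :: η => lc (some i) (sh (d i) (wmc d η))

/-- Multiplicative mixed composition product `c ⟲ d := Σ_η c(η)(η ⟲ d)`.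
Since `η ⟲ d` is supported on words of length `≥ |η|`, only words `η` of length
`≤ |w|` contribute to the coefficient at `w`. -/
def mc {m : ℕ} (c : FPS m) (d : FPST m m) : FPS m :=
  fun w => ∑ k ∈ Finset.range (w.length + 1),
    ∑ η : Fin k → Letter m, c (List.ofFn η) * wmc d (List.ofFn η) w

/-- `⟲` on tuples (componentwise in the left argument). -/
def mcT {m ℓ : ℕ} (c : FPST m ℓ) (d : FPST m m) : FPST m ℓ := fun i => mc (c i) d

/-- `ψ_d(η)(𝟙)`, where `ψ_d(x'_0)(e) = x_0(𝟙 ⧢ e)` and `ψ_d(x'_i)(e) = x_0(d_i ⧢ e)`. -/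
def wcomp {m ℓ : ℕ} (d : FPST m ℓ) : Word ℓ → FPS m
  | [] => unit m
  | none :: η => lc none (sh (unit m) (wcomp d η))
  | some i :: η => lc none (sh (d i) (wcomp d η))

/-- Composition product `c ∘ d := Σ_η c(η) ψ_d(η)(𝟙)`; since `ψ_d(η)(𝟙)` is supported
on words of length `≥ |η|`, only `η` with `|η| ≤ |w|` contribute at `w`. -/
def comp {m ℓ : ℕ} (c : FPS ℓ) (d : FPST m ℓ) : FPS m :=
  fun w => ∑ k ∈ Finset.range (w.length + 1),
    ∑ η : Fin k → Letter ℓ, c (List.ofFn η) * wcomp d (List.ofFn η) w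

/-- `∘` componentwise in the left argument. -/
def compT {m ℓ q : ℕ} (c : FPST ℓ q) (d : FPST m ℓ) : FPST m q := fun i => comp (c i) d

/-- Multiplicative composition product `c ⋆ d := d ⧢ (c ⟲ d)`. -/
def star {m : ℕ} (c d : FPST m m) : FPST m m := fun i => sh (d i) (mc (c i) d)

/-- Iteration of `e ↦ c(𝟙)⁻¹ ⬝ (𝟙 − c' ⧢ e)` (with `c'` the proper part of `c`),
whose fixed point is the shuffle inverse of `c` when `c(𝟙) ≠ 0`. -/
def shInvAux {m : ℕ} (c : FPS m) : ℕ → FPS m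
  | 0 => fun _ => 0
  | n + 1 => fun w =>
      (c [])⁻¹ * (unit m w - sh (fun u => if u = [] then 0 else c u) (shInvAux c n) w)

/-- Shuffle inverse `c^{⧢-1}` (the coefficient at `w` stabilizes after `|w|+1` iterations). -/
def shInv {m : ℕ} (c : FPS m) : FPS m := fun w => shInvAux c (w.length + 1) w

/-- Componentwise shuffle inverse of a tuple. -/
def shInvT {m ℓ : ℕ} (c : FPST m ℓ) : FPST m ℓ := fun i => shInv (c i)

/-- Iteration of the strong contraction `e ↦ d^{⧢-1} ⟲ e`, whose fixed point is `d^{⋆-1}`. -/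
def starInvAux {m : ℕ} (d : FPST m m) : ℕ → FPST m m
  | 0 => fun _ _ => 0
  | n + 1 => mcT (shInvT d) (starInvAux d n)

/-- `⋆`-inverse `d^{⋆-1}` of a purely improper tuple. -/
def starInv {m : ℕ} (d : FPST m m) : FPST m m := fun i w => starInvAux d (w.length + 1) i w

/-- Multiplicative dynamic feedback product `c @̌ d := c ⟲ (d^{⧢-1} ∘ c)^{⋆-1}`. -/
def fb {m q : ℕ} (c : FPST m q) (d : FPST q m) : FPST m q :=
  mcT c (starInv (compT (shInvT d) c))

/-- Valuation: minimal length of a word in the support (`⊤` for the zero series). -/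
def val {m : ℕ} (c : FPS m) : ℕ∞ :=
  sInf ((fun w : Word m => (w.length : ℕ∞)) '' {w | c w ≠ 0})

/-- Valuation of a tuple: minimum over components. -/
def valT {m ℓ : ℕ} (c : FPST m ℓ) : ℕ∞ := ⨅ i, val (c i)

/-- `σ^v` for `v : ℕ∞`, with `σ^∞ = 0`; so `κ(a,b) = enpow σ (val (a-b))`. -/
def enpow (σ : ℝ) (v : ℕ∞) : ℝ := if v = ⊤ then 0 else σ ^ v.toNat

/-- The natural part `c_N`: restriction of `c` to words in the letter `x_0` only. -/
def natPart {m : ℕ} (c : FPS m) : FPS m :=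
  fun w => if ∀ x ∈ w, x = (none : Letter m) then c w else 0

/-- The forced part `c_F := c − c_N`. -/
def forcedPart {m : ℕ} (c : FPS m) : FPS m := fun w => c w - natPart c w

/-- `c` has (finite) class `r ≥ 1`: `supp(c_F) ⊆ x_0^{r-1}X^+` and `supp(c_F) ⊄ x_0^r X^+`. -/
def hasClassF {m : ℕ} (c : FPS m) (r : ℕ) : Prop :=
  1 ≤ r ∧
  (∀ w, forcedPart c w ≠ 0 → ∃ v, v ≠ [] ∧ w = List.replicate (r - 1) (none : Letter m) ++ v) ∧
  ¬ (∀ w, forcedPart c w ≠ 0 → ∃ v, v ≠ [] ∧ w = List.replicate r (none : Letter m) ++ v)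

/-- `𝒞(c) = r` for `r : ℕ∞`, with `𝒞(c) = ∞` iff `c_F = 0`. -/
def hasClass {m : ℕ} (c : FPS m) (r : ℕ∞) : Prop :=
  (r = ⊤ ∧ forcedPart c = fun _ => 0) ∨ ∃ n : ℕ, r = (n : ℕ∞) ∧ hasClassF c n

/-- `c` has relative degree `r`: `𝒞(c) = r` and `x_0^{r-1} x_1 ∈ supp(c_F)`. -/
def hasRelDeg (c : FPS 1) (r : ℕ) : Prop :=
  hasClassF c r ∧
  forcedPart c (List.replicate (r - 1) (none : Letter 1) ++ [some 0]) ≠ 0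

/-- `⟲` for single (SISO, `m = 1`) series. -/
def mc1 (c d : FPS 1) : FPS 1 := mc c (fun _ => d)

/-- The multiplicative dynamic feedback product for single (SISO) series. -/
def fb1 (c d : FPS 1) : FPS 1 :=
  mc c (starInv (compT (fun _ : Fin 1 => shInv d) (fun _ : Fin 1 => c)))

end

end CFS

/-!
Order series by the length of the shortest word in their support, and call an operator a
contraction if it improves agreement by one order; contractions have exactly one fixed point, the
limit of their iterates. Both `d ↦ c ⟲ d` and `e ↦ d ∘ e` are contractions, hence so is
`e ↦ c ⟲ (d ∘ e)`, which gives uniqueness.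

For existence, `u = (d^{⧢-1} ∘ c)^{⋆-1}` satisfies `u = (d^{⧢-1} ∘ c)^{⧢-1} ⟲ u`. Composition on the
right is a homomorphism of shuffle algebras and `(d ∘ c) ⟲ u = d ∘ (c ⟲ u)`, so
`u = (d ∘ c) ⟲ u = d ∘ (c ⟲ u)`, and applying `c ⟲ ·` shows that `c ⟲ u` is a fixed point. The two
facts about `∘` and `⟲` hold because both are substitutions that replace every letter `y` by
`Σ_x x (A y x ⧢ ·)` for a matrix `A` of series: such substitutions are shuffle homomorphisms, and
they compose by a matrix chain rule.
-/

namespace CFS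

variable {m l k : ℕ}

/-- The left shift `x⁻¹ c` of a series, adjoint to left concatenation by `x`. Shifts are derivations
of the shuffle product, and a series is determined by its constant term and its shifts. -/
def shift (x : Letter m) : FPS m →ₗ[ℝ] FPS m := LinearMap.funLeft ℝ ℝ (List.cons x)

@[simp]
theorem shift_apply (x : Letter m) (a : FPS m) (w : Word m) : shift x a w = a (x :: w) := rfl

@[simp]
theorem shift_unit (x : Letter m) : shift x (unit m) = 0 := by
  ext w
  simp [unit]

theorem shift_lc (x y : Letter m) (a : FPS m) : shift x (lc y a) = if x = y then a else 0 := by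
  ext w
  by_cases h : x = y <;> simp [lc, h]

@[simp]
theorem lc_zero (x : Letter m) : lc x (0 : FPS m) = 0 := by
  ext w
  cases w <;> simp [lc]

theorem ext_shift {a b : FPS m} (h_nil : a [] = b []) (h_shift : ∀ x, shift x a = shift x b) :
    a = b := by
  ext w
  cases w with
  | nil => exact h_nil
  | cons x w => exact congrFun (h_shift x) w

/-! ### The shuffle algebra -/

@[simp]
theorem sh_nil (a b : FPS m) : sh a b [] = a [] * b [] := rfl

theorem sh_cons (a b : FPS m) (x : Letter m) (w : Word m) :
    sh a b (x :: w) = sh (shift x a) b w + sh a (shift x b) w := rfl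

theorem shift_sh (x : Letter m) (a b : FPS m) :
    shift x (sh a b) = sh (shift x a) b + sh a (shift x b) := rfl

theorem sh_comm (a b : FPS m) : sh a b = sh b a := by
  ext w
  induction w generalizing a b with
  | nil => simp [mul_comm]
  | cons x w ih => rw [sh_cons, sh_cons, ih, ih a, add_comm]

theorem sh_add (a b c : FPS m) : sh a (b + c) = sh a b + sh a c := by
  ext w
  induction w generalizing a b c with
  | nil => simp [mul_add]
  | cons x w ih => simp only [Pi.add_apply, sh_cons, map_add, ih]; ring

theorem sh_smul (r : ℝ) (a b : FPS m) : sh a (r • b) = r • sh a b := by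
  ext w
  induction w generalizing a b with
  | nil => simp [mul_left_comm]
  | cons x w ih => simp only [Pi.smul_apply, sh_cons, map_smul, ih, smul_add]

theorem add_sh (a b c : FPS m) : sh (a + b) c = sh a c + sh b c := by
  simp only [sh_comm _ c, sh_add]

theorem smul_sh (r : ℝ) (a b : FPS m) : sh (r • a) b = r • sh a b := by
  simp only [sh_comm _ b, sh_smul]

/-- The shuffle product as a bilinear map. -/
def shBilin (m : ℕ) : FPS m →ₗ[ℝ] FPS m →ₗ[ℝ] FPS m :=
  LinearMap.mk₂ ℝ sh add_sh smul_sh sh_add sh_smul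

@[simp]
theorem sh_zero (a : FPS m) : sh a 0 = 0 := map_zero (shBilin m a)

@[simp]
theorem zero_sh (a : FPS m) : sh 0 a = 0 := (shBilin m).map_zero₂ a

theorem sh_sub (a b c : FPS m) : sh a (b - c) = sh a b - sh a c := map_sub (shBilin m a) b c

theorem sh_sum {ι : Type*} (s : Finset ι) (a : FPS m) (f : ι → FPS m) :
    sh a (∑ i ∈ s, f i) = ∑ i ∈ s, sh a (f i) :=
  map_sum (shBilin m a) f s

theorem sum_sh {ι : Type*} (s : Finset ι) (f : ι → FPS m) (a : FPS m) :
    sh (∑ i ∈ s, f i) a = ∑ i ∈ s, sh (f i) a :=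
  (shBilin m).map_sum₂ s f a

theorem sh_assoc (a b c : FPS m) : sh (sh a b) c = sh a (sh b c) := by
  ext w
  induction w generalizing a b c with
  | nil => simp [mul_assoc]
  | cons x w ih => simp only [sh_cons, shift_sh, add_sh, sh_add, Pi.add_apply, ih]; ring

theorem sh_left_comm (a b c : FPS m) : sh a (sh b c) = sh b (sh a c) := by
  rw [← sh_assoc, sh_comm a, sh_assoc]

@[simp]
theorem unit_sh (a : FPS m) : sh (unit m) a = a := by
  ext w
  induction w generalizing a with
  | nil => simp [unit]
  | cons x w ih => simp [sh_cons, ih]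

@[simp]
theorem sh_unit (a : FPS m) : sh a (unit m) = a := by rw [sh_comm, unit_sh]

/-! ### The order filtration -/

/-- The series of order at least `n`, that is, with no word shorter than `n` in their support.
Congruence modulo this submodule is agreement on all words shorter than `n`. -/
def orderGE (m n : ℕ) : Submodule ℝ (FPS m) where
  carrier := {a | ∀ w : Word m, w.length < n → a w = 0}
  add_mem' ha hb w hw := by simp [ha w hw, hb w hw]
  zero_mem' _ _ := rfl
  smul_mem' r a ha w hw := by simp [ha w hw]

theorem mem_orderGE {n : ℕ} {a : FPS m} :
    a ∈ orderGE m n ↔ ∀ w : Word m, w.length < n → a w = 0 := Iff.rfl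

theorem smodEq_orderGE {n : ℕ} {a b : FPS m} :
    a ≡ b [SMOD orderGE m n] ↔ ∀ w : Word m, w.length < n → a w = b w := by
  simp [SModEq.sub_mem, mem_orderGE, sub_eq_zero]

theorem orderGE_antitone : Antitone (orderGE m) :=
  fun _ _ h _ ha w hw => ha w (hw.trans_le h)

theorem smodEq_orderGE_zero (a b : FPS m) : a ≡ b [SMOD orderGE m 0] := by
  simp [smodEq_orderGE]

theorem smodEq_orderGE_succ {n : ℕ} {a b : FPS m} :
    a ≡ b [SMOD orderGE m (n + 1)] ↔
      a [] = b [] ∧ ∀ x, shift x a ≡ shift x b [SMOD orderGE m n] := by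
  simp only [smodEq_orderGE, shift_apply]
  refine ⟨fun h => ⟨h [] (by simp), fun x w hw => h (x :: w) (by simpa using hw)⟩, ?_⟩
  rintro ⟨h_nil, h_cons⟩ (_ | ⟨x, w⟩) hw
  · exact h_nil
  · exact h_cons x w (by simpa using hw)

theorem eq_of_forall_smodEq_orderGE {a b : FPS m} (h : ∀ n, a ≡ b [SMOD orderGE m n]) :
    a = b := by
  ext w
  exact smodEq_orderGE.1 (h (w.length + 1)) w (Nat.lt_succ_self _)

theorem shift_mem_orderGE {n : ℕ} {a : FPS m} (ha : a ∈ orderGE m n) (x : Letter m) :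
    shift x a ∈ orderGE m (n - 1) :=
  fun w hw => ha (x :: w) (by simp only [List.length_cons]; omega)

theorem sh_mem_orderGE {i j : ℕ} {a b : FPS m} (ha : a ∈ orderGE m i) (hb : b ∈ orderGE m j) :
    sh a b ∈ orderGE m (i + j) := by
  intro w hw
  induction w generalizing a b i j with
  | nil =>
    rcases i.eq_zero_or_pos with rfl | hi
    · simp [hb [] (by simpa using hw)]
    · simp [ha [] hi]
  | cons x w ih =>
    rw [List.length_cons] at hw
    rw [sh_cons, ih (shift_mem_orderGE ha x) hb (by omega),
      ih ha (shift_mem_orderGE hb x) (by omega), add_zero]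

theorem sh_smodEq_sh_right {i j : ℕ} {a b c : FPS m} (ha : a ∈ orderGE m i)
    (h : b ≡ c [SMOD orderGE m j]) : sh a b ≡ sh a c [SMOD orderGE m (i + j)] := by
  rw [SModEq.sub_mem, ← sh_sub]
  exact sh_mem_orderGE ha (SModEq.sub_mem.1 h)

theorem sh_smodEq_sh {n : ℕ} {a a' b b' : FPS m} (ha : a ≡ a' [SMOD orderGE m n])
    (hb : b ≡ b' [SMOD orderGE m n]) : sh a b ≡ sh a' b' [SMOD orderGE m n] := by
  have h_right (c : FPS m) {b b' : FPS m} (h : b ≡ b' [SMOD orderGE m n]) :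
      sh c b ≡ sh c b' [SMOD orderGE m n] := by
    simpa using sh_smodEq_sh_right (i := 0) (a := c) (by simp [mem_orderGE]) h
  refine (h_right a hb).trans ?_
  rw [sh_comm a, sh_comm a']
  exact h_right b' ha

/-! ### Contractions of tuples of series -/

/-- A map of tuples is a contraction if it turns agreement up to order `n` into agreement up to
order `n + 1`, that is, if it is `σ`-Lipschitz for the ultrametric `σ ^ val (a - b)`. -/
def IsContraction {m' l' : ℕ} (T : FPST m l → FPST m' l') : Prop :=
  ∀ ⦃n : ℕ⦄ ⦃a b : FPST m l⦄, (∀ i, a i ≡ b i [SMOD orderGE m n]) →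
    ∀ i, T a i ≡ T b i [SMOD orderGE m' (n + 1)]

/-- The limit of the iterates of `T` from `0`, for a contraction `T`: the coefficient at `w` is
constant from the iterate `|w| + 1` on. -/
def iterLimit (T : FPST m l → FPST m l) : FPST m l := fun i w => T^[w.length + 1] 0 i w

namespace IsContraction

variable {T : FPST m l → FPST m l}

theorem comp {m' l' m'' l'' : ℕ} {S : FPST m' l' → FPST m'' l''} {T : FPST m l → FPST m' l'}
    (hS : IsContraction S) (hT : IsContraction T) : IsContraction (S ∘ T) :=
  fun n _ _ h i => hS (fun j => (hT h j).mono (orderGE_antitone n.le_succ)) i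

theorem iterate_smodEq (hT : IsContraction T) (n : ℕ) (a b : FPST m l) (i : Fin l) :
    T^[n] a i ≡ T^[n] b i [SMOD orderGE m n] := by
  induction n generalizing i with
  | zero => exact smodEq_orderGE_zero _ _
  | succ n ih =>
    rw [Function.iterate_succ_apply', Function.iterate_succ_apply']
    exact hT ih i

theorem fixedPoint_unique (hT : IsContraction T) {a b : FPST m l}
    (ha : Function.IsFixedPt T a) (hb : Function.IsFixedPt T b) : a = b := by
  funext i
  refine eq_of_forall_smodEq_orderGE fun n => ?_
  simpa only [(ha.iterate n).eq, (hb.iterate n).eq] using hT.iterate_smodEq n a b i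

theorem iterate_smodEq_iterLimit (hT : IsContraction T) (n : ℕ) (i : Fin l) :
    T^[n] 0 i ≡ iterLimit T i [SMOD orderGE m n] := by
  refine smodEq_orderGE.2 fun w hw => ?_
  obtain ⟨j, rfl⟩ := Nat.exists_eq_add_of_le hw
  rw [Function.iterate_add_apply]
  exact smodEq_orderGE.1 (hT.iterate_smodEq _ _ 0 i) w (Nat.lt_succ_self _)

theorem isFixedPt_iterLimit (hT : IsContraction T) : Function.IsFixedPt T (iterLimit T) := by
  funext i
  refine eq_of_forall_smodEq_orderGE fun n => SModEq.mono (orderGE_antitone n.le_succ) ?_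
  calc T (iterLimit T) i
    _ ≡ T (T^[n] 0) i [SMOD orderGE m (n + 1)] :=
      (hT (fun j => hT.iterate_smodEq_iterLimit n j) i).symm
    _ = T^[n + 1] 0 i := by rw [Function.iterate_succ_apply']
    _ ≡ iterLimit T i [SMOD orderGE m (n + 1)] := hT.iterate_smodEq_iterLimit (n + 1) i

end IsContraction

/-! ### The shuffle inverse -/

/-- The proper part `c'` of `c`, obtained by removing the constant term. -/
def properPart (c : FPS m) : FPS m := fun u => if u = [] then 0 else c u

theorem properPart_mem_orderGE (c : FPS m) : properPart c ∈ orderGE m 1 := by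
  intro w hw
  simp [properPart, List.length_eq_zero_iff.1 (Nat.lt_one_iff.1 hw)]

theorem smul_unit_add_properPart (c : FPS m) : c [] • unit m + properPart c = c := by
  ext w
  by_cases hw : w = [] <;> simp [properPart, unit, hw]

/-- The map `e ↦ c(𝟙)⁻¹ (𝟙 - c' ⧢ e)`, whose iterates from `0` are `shInvAux`. -/
noncomputable def shInvStep (c e : FPST m l) : FPST m l :=
  fun i => (c i [])⁻¹ • (unit m - sh (properPart (c i)) (e i))

theorem isContraction_shInvStep (c : FPST m l) : IsContraction (shInvStep c) := by
  intro n a b h i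
  have h_sh := sh_smodEq_sh_right (properPart_mem_orderGE (c i)) (h i)
  rw [add_comm 1 n] at h_sh
  exact (SModEq.rfl.sub h_sh).smul _

theorem iterate_shInvStep (c : FPST m l) (n : ℕ) :
    (shInvStep c)^[n] 0 = fun i => shInvAux (c i) n := by
  induction n with
  | zero => rfl
  | succ n ih => rw [Function.iterate_succ_apply', ih]; rfl

theorem shInvT_eq_iterLimit (c : FPST m l) : shInvT c = iterLimit (shInvStep c) := by
  funext i w
  simp only [shInvT, shInv, iterLimit, iterate_shInvStep]

theorem shT_eq_unitT_of_isFixedPt_shInvStep {c e : FPST m l} (hc : PurelyImproper c)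
    (he : Function.IsFixedPt (shInvStep c) e) : shT c e = unitT m l := by
  funext i
  have h_fix : c i [] • e i = unit m - sh (properPart (c i)) (e i) := by
    conv_lhs => rw [← he.eq]
    exact smul_inv_smul₀ (hc i) _
  calc sh (c i) (e i)
    _ = sh (c i [] • unit m + properPart (c i)) (e i) := by rw [smul_unit_add_properPart]
    _ = c i [] • e i + sh (properPart (c i)) (e i) := by rw [add_sh, smul_sh, unit_sh]
    _ = unit m := by rw [h_fix, sub_add_cancel]

theorem shT_shInvT {c : FPST m l} (hc : PurelyImproper c) : shT c (shInvT c) = unitT m l := by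
  rw [shInvT_eq_iterLimit]
  exact shT_eq_unitT_of_isFixedPt_shInvStep hc (isContraction_shInvStep c).isFixedPt_iterLimit

theorem purelyImproper_of_shT_eq_unitT {a b : FPST m l} (h : shT a b = unitT m l) :
    PurelyImproper a := by
  intro i
  have h_nil : a i [] * b i [] = 1 := congrFun (congrFun h i) []
  exact left_ne_zero_of_mul_eq_one h_nil

theorem shInvT_eq_of_shT_eq_unitT {a b : FPST m l} (h : shT a b = unitT m l) :
    shInvT a = b := by
  have h_inv := shT_shInvT (purelyImproper_of_shT_eq_unitT h)
  funext i
  calc shInvT a i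
    _ = sh (shInvT a i) (sh (a i) (b i)) := by
      rw [show sh (a i) (b i) = unit m from congrFun h i, sh_unit]
    _ = sh (sh (a i) (shInvT a i)) (b i) := by rw [sh_left_comm, sh_assoc]
    _ = b i := by rw [show sh (a i) (shInvT a i) = unit m from congrFun h_inv i, unit_sh]

/-! ### Letter substitutions -/

/-- The data of a substitution `ℝ⟨⟨Y⟩⟩ → ℝ⟨⟨X⟩⟩` that turns a leading letter `y` into
`Σ_x x (A y x ⧢ ·)`. -/
abbrev SubstMatrix (l m : ℕ) := Letter l → Letter m → FPS m

/-- The image of a word under the substitution given by `A`. -/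
noncomputable def wordSubst (A : SubstMatrix l m) : Word l → FPS m
  | [] => unit m
  | y :: η => ∑ x, lc x (sh (A y x) (wordSubst A η))

theorem wordSubst_cons_nil (A : SubstMatrix l m) (y : Letter l) (η : Word l) :
    wordSubst A (y :: η) [] = 0 := by
  simp [wordSubst, lc]

theorem shift_wordSubst_cons (A : SubstMatrix l m) (y : Letter l) (η : Word l) (x : Letter m) :
    shift x (wordSubst A (y :: η)) = sh (A y x) (wordSubst A η) := by
  simp [wordSubst, shift_lc, -Fintype.sum_option]

/-- The substitution given by `A`, applied to the part of a series supported on words shorter than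
`n`. -/
noncomputable def substBelow (A : SubstMatrix l m) (n : ℕ) : FPS l →ₗ[ℝ] FPS m :=
  ∑ j ∈ Finset.range n, ∑ η : Fin j → Letter l,
    (LinearMap.proj (List.ofFn η)).smulRight (wordSubst A (List.ofFn η))

theorem substBelow_apply (A : SubstMatrix l m) (n : ℕ) (c : FPS l) :
    substBelow A n c = ∑ j ∈ Finset.range n, ∑ η : Fin j → Letter l,
      c (List.ofFn η) • wordSubst A (List.ofFn η) := by
  simp [substBelow]

theorem substBelow_succ (A : SubstMatrix l m) (n : ℕ) (c : FPS l) :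
    substBelow A (n + 1) c = c [] • unit m + ∑ j ∈ Finset.range n, ∑ y, ∑ η : Fin j → Letter l,
      c (y :: List.ofFn η) • wordSubst A (y :: List.ofFn η) := by
  have h_cons (j : ℕ) :
      ∑ η : Fin (j + 1) → Letter l, c (List.ofFn η) • wordSubst A (List.ofFn η) =
        ∑ y, ∑ η : Fin j → Letter l, c (y :: List.ofFn η) • wordSubst A (y :: List.ofFn η) := by
    rw [← (Fin.consEquiv fun _ => Letter l).sum_comp, Fintype.sum_prod_type]
    simp [Fin.consEquiv, List.ofFn_succ]
  rw [substBelow_apply, Finset.sum_range_succ', add_comm, Finset.sum_congr rfl fun j _ => h_cons j]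
  simp [wordSubst, -Fintype.sum_option]

theorem substBelow_succ_nil (A : SubstMatrix l m) (n : ℕ) (c : FPS l) :
    substBelow A (n + 1) c [] = c [] := by
  simp [substBelow_succ, wordSubst_cons_nil, unit]

theorem shift_substBelow_succ (A : SubstMatrix l m) (n : ℕ) (c : FPS l) (x : Letter m) :
    shift x (substBelow A (n + 1) c) = ∑ y, sh (A y x) (substBelow A n (shift y c)) := by
  simp only [substBelow_succ, substBelow_apply, map_add, map_smul, map_sum, shift_unit, smul_zero,
    zero_add, shift_wordSubst_cons, shift_apply, sh_sum, sh_smul]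
  exact Finset.sum_comm

theorem substBelow_smodEq_add (A : SubstMatrix l m) (n j : ℕ) (c : FPS l) :
    substBelow A n c ≡ substBelow A (n + j) c [SMOD orderGE m n] := by
  induction n generalizing c with
  | zero => exact smodEq_orderGE_zero _ _
  | succ n ih =>
    rw [Nat.add_right_comm]
    refine smodEq_orderGE_succ.2 ⟨by simp only [substBelow_succ_nil], fun x => ?_⟩
    rw [shift_substBelow_succ, shift_substBelow_succ]
    exact SModEq.sum fun y _ => sh_smodEq_sh SModEq.rfl (ih _)

/-- The substitution given by `A`. The image of a word `η` is supported on words of length at least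
`|η|`, so that `substBelow A (|w| + 1)` gives the coefficient at `w`. -/
noncomputable def subst (A : SubstMatrix l m) : FPS l →ₗ[ℝ] FPS m :=
  LinearMap.pi fun w => LinearMap.proj w ∘ₗ substBelow A (w.length + 1)

theorem subst_apply (A : SubstMatrix l m) (c : FPS l) (w : Word m) :
    subst A c w = substBelow A (w.length + 1) c w := rfl

theorem substBelow_smodEq_subst (A : SubstMatrix l m) (n : ℕ) (c : FPS l) :
    substBelow A n c ≡ subst A c [SMOD orderGE m n] := by
  refine smodEq_orderGE.2 fun w hw => ?_
  obtain ⟨j, rfl⟩ := Nat.exists_eq_add_of_le hw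
  exact (smodEq_orderGE.1 (substBelow_smodEq_add A _ j c) w (Nat.lt_succ_self _)).symm

@[simp]
theorem subst_nil (A : SubstMatrix l m) (c : FPS l) : subst A c [] = c [] :=
  substBelow_succ_nil A 0 c

theorem shift_subst (A : SubstMatrix l m) (c : FPS l) (x : Letter m) :
    shift x (subst A c) = ∑ y, sh (A y x) (subst A (shift y c)) := by
  refine eq_of_forall_smodEq_orderGE fun n => ?_
  calc shift x (subst A c)
    _ ≡ shift x (substBelow A (n + 1) c) [SMOD orderGE m n] :=
      ((smodEq_orderGE_succ.1 (substBelow_smodEq_subst A (n + 1) c)).2 x).symm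
    _ = ∑ y, sh (A y x) (substBelow A n (shift y c)) := shift_substBelow_succ A n c x
    _ ≡ ∑ y, sh (A y x) (subst A (shift y c)) [SMOD orderGE m n] :=
      SModEq.sum fun y _ => sh_smodEq_sh SModEq.rfl (substBelow_smodEq_subst A n _)

theorem subst_unit (A : SubstMatrix l m) : subst A (unit l) = unit m :=
  ext_shift (by simp [unit]) fun x => by simp [shift_subst]

theorem subst_sh (A : SubstMatrix l m) (a b : FPS l) :
    subst A (sh a b) = sh (subst A a) (subst A b) := by
  refine eq_of_forall_smodEq_orderGE fun n => ?_
  induction n generalizing a b with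
  | zero => exact smodEq_orderGE_zero _ _
  | succ n ih =>
    refine smodEq_orderGE_succ.2 ⟨by simp, fun x => ?_⟩
    simp only [shift_subst, shift_sh, map_add, sh_add, sum_sh, sh_sum, ← Finset.sum_add_distrib]
    refine SModEq.sum fun y _ => ?_
    rw [sh_assoc, sh_left_comm (subst A a)]
    exact (sh_smodEq_sh SModEq.rfl (ih _ _)).add (sh_smodEq_sh SModEq.rfl (ih _ _))

/-- The matrix of the substitution by `B` followed by the substitution by `A`. -/
noncomputable def substMatrixComp (A : SubstMatrix l m) (B : SubstMatrix k l) : SubstMatrix k m :=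
  fun z x => ∑ y, sh (A y x) (subst A (B z y))

theorem subst_subst (A : SubstMatrix l m) (B : SubstMatrix k l) (c : FPS k) :
    subst A (subst B c) = subst (substMatrixComp A B) c := by
  refine eq_of_forall_smodEq_orderGE fun n => ?_
  induction n generalizing c with
  | zero => exact smodEq_orderGE_zero _ _
  | succ n ih =>
    refine smodEq_orderGE_succ.2 ⟨by simp, fun x => ?_⟩
    simp only [shift_subst, map_sum, subst_sh, sh_sum, substMatrixComp, sum_sh, sh_assoc]
    rw [Finset.sum_comm]
    exact SModEq.sum fun z _ => SModEq.sum fun y _ =>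
      sh_smodEq_sh SModEq.rfl (sh_smodEq_sh SModEq.rfl (ih _))

theorem subst_smodEq_subst {n : ℕ} {A B : SubstMatrix l m}
    (h : ∀ y x, A y x ≡ B y x [SMOD orderGE m n]) (c : FPS l) :
    subst A c ≡ subst B c [SMOD orderGE m (n + 1)] := by
  induction n generalizing c with
  | zero => exact smodEq_orderGE_succ.2 ⟨by simp, fun _ => smodEq_orderGE_zero _ _⟩
  | succ n ih =>
    refine smodEq_orderGE_succ.2 ⟨by simp, fun x => ?_⟩
    rw [shift_subst, shift_subst]
    exact SModEq.sum fun y _ => sh_smodEq_sh (h y x)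
      (ih (fun y x => (h y x).mono (orderGE_antitone n.le_succ)) _)

/-! ### The products `⟲` and `∘` -/

/-- The family `d` extended by the convention `d_0 = 𝟙`. -/
def withUnit (d : FPST m l) : Letter l → FPS m
  | none => unit m
  | some i => d i

/-- The matrix of `c ↦ c ⟲ d`, which turns `x_i` into `x_i (d_i ⧢ ·)`. -/
def mixedMatrix (d : FPST m m) : SubstMatrix m m :=
  fun y x => if x = y then withUnit d y else 0

/-- The matrix of `c ↦ c ∘ d`, which turns `x'_i` into `x_0 (d_i ⧢ ·)`. -/
def compMatrix (d : FPST m l) : SubstMatrix l m :=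
  fun y x => if x = none then withUnit d y else 0

theorem wmc_eq_wordSubst (d : FPST m m) (η : Word m) : wmc d η = wordSubst (mixedMatrix d) η := by
  induction η with
  | nil => rfl
  | cons y η ih =>
    rw [wordSubst, Finset.sum_eq_single y (by simp +contextual [mixedMatrix]) (by simp)]
    cases y <;> simp [wmc, mixedMatrix, withUnit, ih]

theorem wcomp_eq_wordSubst (d : FPST m l) (η : Word l) :
    wcomp d η = wordSubst (compMatrix d) η := by
  induction η with
  | nil => rfl
  | cons y η ih =>
    rw [wordSubst, Finset.sum_eq_single none (by simp +contextual [compMatrix]) (by simp)]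
    cases y <;> simp [wcomp, compMatrix, withUnit, ih]

theorem mc_eq_subst (c : FPS m) (d : FPST m m) : mc c d = subst (mixedMatrix d) c := by
  ext w
  simp [mc, subst_apply, substBelow_apply, wmc_eq_wordSubst]

theorem comp_eq_subst (c : FPS l) (d : FPST m l) : comp c d = subst (compMatrix d) c := by
  ext w
  simp [comp, subst_apply, substBelow_apply, wcomp_eq_wordSubst]

theorem withUnit_smodEq {n : ℕ} {d e : FPST m l} (h : ∀ i, d i ≡ e i [SMOD orderGE m n])
    (y : Letter l) : withUnit d y ≡ withUnit e y [SMOD orderGE m n] := by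
  cases y with
  | none => exact SModEq.rfl
  | some i => exact h i

theorem isContraction_mcT (c : FPST m l) : IsContraction (mcT c) := by
  intro n d e h i
  simp only [mcT, mc_eq_subst]
  refine subst_smodEq_subst (fun y x => ?_) (c i)
  unfold mixedMatrix
  split_ifs
  exacts [withUnit_smodEq h y, SModEq.rfl]

theorem isContraction_compT (c : FPST l k) :
    IsContraction (compT c : FPST m l → FPST m k) := by
  intro n d e h i
  simp only [compT, comp_eq_subst]
  refine subst_smodEq_subst (fun y x => ?_) (c i)
  unfold compMatrix
  split_ifs
  exacts [withUnit_smodEq h y, SModEq.rfl]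

theorem compT_shT (a b : FPST l k) (e : FPST m l) :
    compT (shT a b) e = shT (compT a e) (compT b e) := by
  funext i
  simp only [compT, shT, comp_eq_subst, subst_sh]

theorem compT_unitT (e : FPST m l) : compT (unitT l k) e = unitT m k := by
  funext i
  simp only [compT, unitT, comp_eq_subst, subst_unit]

theorem substMatrixComp_mixedMatrix_compMatrix (u : FPST m m) (e : FPST m l) :
    substMatrixComp (mixedMatrix u) (compMatrix e) = compMatrix (mcT e u) := by
  funext z x
  rw [substMatrixComp, Finset.sum_eq_single none (by simp +contextual [compMatrix]) (by simp)]
  by_cases hx : x = none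
  · cases z <;> simp [mixedMatrix, compMatrix, withUnit, hx, subst_unit, mcT, mc_eq_subst]
  · simp [mixedMatrix, compMatrix, hx]

theorem mcT_compT (c : FPST l k) (e : FPST m l) (u : FPST m m) :
    mcT (compT c e) u = compT c (mcT e u) := by
  funext i
  simp only [mcT, compT, mc_eq_subst, comp_eq_subst, subst_subst,
    substMatrixComp_mixedMatrix_compMatrix]

theorem shInvT_compT_shInvT {d : FPST l k} (hd : PurelyImproper d) (c : FPST m l) :
    shInvT (compT (shInvT d) c) = compT d c := by
  refine shInvT_eq_of_shT_eq_unitT ?_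
  rw [← compT_shT, ← compT_unitT c, ← shT_shInvT hd]
  congr 1
  funext i
  exact sh_comm _ _

theorem iterate_mcT_shInvT (d : FPST m m) (n : ℕ) : (mcT (shInvT d))^[n] 0 = starInvAux d n := by
  induction n with
  | zero => rfl
  | succ n ih => rw [Function.iterate_succ_apply', ih]; rfl

theorem mcT_shInvT_starInv (d : FPST m m) : mcT (shInvT d) (starInv d) = starInv d := by
  have h_lim : starInv d = iterLimit (mcT (shInvT d)) := by
    funext i w
    simp only [starInv, iterLimit, iterate_mcT_shInvT]
  rw [h_lim]
  exact (isContraction_mcT (shInvT d)).isFixedPt_iterLimit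

theorem starInv_compT_shInvT {d : FPST l m} (hd : PurelyImproper d) (c : FPST m l) :
    starInv (compT (shInvT d) c) = compT d (mcT c (starInv (compT (shInvT d) c))) := by
  rw [← mcT_compT, ← shInvT_compT_shInvT hd, mcT_shInvT_starInv]

end CFS

open CFS in
/-- For `c ∈ ℝ^q⟨⟨X⟩⟩` and purely improper `d ∈ ℝ^m⟨⟨X'⟩⟩`
(`|X| = m+1`, `|X'| = q+1`), the series `e₀ := c ⟲ (d^{⧢-1} ∘ c)^{⋆-1}` is the unique
solution in `ℝ^q⟨⟨X⟩⟩` of the fixed point equation `e = c ⟲ (d ∘ e)`. -/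
theorem feedback_fixed_point (m q : ℕ) (c : FPST m q) (d : FPST q m)
    (hd : PurelyImproper d) :
    ∀ e₀ : FPST m q, e₀ = mcT c (starInv (compT (shInvT d) c)) →
      e₀ = mcT c (compT d e₀) ∧
      ∀ e : FPST m q, e = mcT c (compT d e) → e = e₀ := by
  rintro e₀ rfl
  have h_fix : Function.IsFixedPt (mcT c ∘ compT d) (mcT c (starInv (compT (shInvT d) c))) :=
    congrArg (mcT c) (starInv_compT_shInvT hd c).symm
  have h_contr : IsContraction (mcT c ∘ compT d) :=
    (isContraction_mcT c).comp (isContraction_compT d)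
  exact ⟨h_fix.symm, fun e he => h_contr.fixedPoint_unique he.symm h_fix⟩
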